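/- There exist a function f : ℕ → ℕ and a constant c such that the following holds. Let (J,M) be an instance of P||C_max with n jobs, m machines, and processing times p_j ∈ {1,…,T} for some T ∈ ℕ, and for p ∈ {1,…,T} let n_p be the number of jobs with p_j = p. Let P be the convex hull of all y ∈ {0,1}^{M×𝒞_*(T)} satisfying ∑_{C∈𝒞_*(T)} y_{iC} = 1 for every machine i ∈ M and ∑_{i∈M} ∑_{C∈𝒞_*(T)} m(p,C)·y_{iC} = n_p for every p ∈ {1,…,T}. Then xc(P) ≤ f(T)·(n+m+2)^c, i.e., the integer hull of the pattern-configuration program has extension complexity O(f(T)·poly(n,m)). -/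

import Mathlib

open Finset

noncomputable section

/-- An extended formulation of size `k` (number of inequalities) for `P ⊆ ℝ^ι`. -/
def IsEF {ι : Type} [Fintype ι] (P : Set (ι → ℝ)) (k : ℕ) : Prop :=
  ∃ (e l : ℕ) (A : Matrix (Fin k) (Fin e) ℝ) (b : Fin k → ℝ)
    (C : Matrix (Fin l) (Fin e) ℝ) (d : Fin l → ℝ)
    (π : (Fin e → ℝ) →ᵃ[ℝ] (ι → ℝ)),
    π '' {y | (∀ r, A.mulVec y r ≤ b r) ∧ (∀ r, C.mulVec y r = d r)} = P

/-- The extension complexity of `P`. -/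
noncomputable def xc {ι : Type} [Fintype ι] (P : Set (ι → ℝ)) : ℕ :=
  sInf {k | IsEF P k}

/-- A pattern (abstract configuration) for target makespan `T`: the multiplicity
`c q : ℕ` (bounded by `T`) of each processing time `q+1 ∈ {1, …, T}`, with total size
`∑ (q+1)·(c q) ≤ T`. -/
abbrev Pattern (T : ℕ) :=
  {c : Fin T → Fin (T + 1) // ∑ q : Fin T, ((q : ℕ) + 1) * (c q : ℕ) ≤ T}

/-- The integer hull of the pattern-configuration program: the convex hull of all 0/1
vectors `y` assigning exactly one pattern to each machine such that, for each processing
time `p`, the patterns provide exactly `n_p` slots of size `p`. -/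
def Ppat (m T : ℕ) (np : Fin T → ℕ) : Set (Fin m × Pattern T → ℝ) :=
  convexHull ℝ {y | (∀ q, y q = 0 ∨ y q = 1) ∧
    (∀ i : Fin m, ∑ C : Pattern T, y (i, C) = 1) ∧
    (∀ q : Fin T, ∑ i : Fin m, ∑ C : Pattern T,
      ((C.1 q : ℕ) : ℝ) * y (i, C) = (np q : ℝ))}


/-- Over the rationals every matrix has a generalised inverse; clearing its denominators bounds the
denominators needed to solve an integral linear system that is solvable over the reals. -/
lemma exists_uniform_denominator {τ κ : Type} [Fintype τ] [Fintype κ] (G : Matrix τ κ ℤ) :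
    ∃ q : ℕ, 0 < q ∧ ∀ β : τ → ℤ,
      (∃ μ : κ → ℝ, ∀ t, ∑ k, (G t k : ℝ) * μ k = β t) →
      ∃ ν : κ → ℤ, ∀ t, ∑ k, G t k * ν k = q * β t := by
  classical
  let Gq : Matrix τ κ ℚ := G.map (Int.cast)
  obtain ⟨s, hs⟩ := (Gq.mulVecLin.rangeRestrict).exists_rightInverse_of_surjective
    (LinearMap.range_rangeRestrict _)
  obtain ⟨h, hh⟩ := LinearMap.exists_extend s
  let H : Matrix κ τ ℚ := LinearMap.toMatrix' h
  have hGHG : Gq * H * Gq = Gq := by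
    apply Matrix.ext_of_mulVec_single
    intro i
    set v : κ → ℚ := Pi.single i 1
    have h1 : (H * Gq).mulVec v = h (Gq.mulVecLin v) := by
      rw [← Matrix.mulVec_mulVec]
      exact LinearMap.toMatrix'_mulVec h _
    have h2 : h (Gq.mulVecLin v) = s (Gq.mulVecLin.rangeRestrict v) := by
      rw [← hh]; rfl
    have h3 := congrArg Subtype.val (LinearMap.congr_fun hs (Gq.mulVecLin.rangeRestrict v))
    rw [Matrix.mul_assoc, ← Matrix.mulVec_mulVec, h1, h2]
    exact h3
  let q : ℕ := ∏ k, ∏ t, (H k t).den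
  have hq : 0 < q := Finset.prod_pos fun k _ => Finset.prod_pos fun t _ => (H k t).den_pos
  have hint : ∀ k t, ∃ z : ℤ, (z : ℚ) = q * H k t := by
    intro k t
    have hd : (H k t).den ∣ q :=
      (Finset.dvd_prod_of_mem (fun t => (H k t).den) (mem_univ t)).trans
        (Finset.dvd_prod_of_mem (fun k => ∏ t, (H k t).den) (mem_univ k))
    obtain ⟨w, hw⟩ := hd
    refine ⟨w * (H k t).num, ?_⟩
    rw [hw]
    push_cast
    rw [mul_comm ((H k t).den : ℚ), mul_assoc, Rat.den_mul_eq_num]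
  choose Z hZ using hint
  refine ⟨q, hq, fun β ⟨μ, hμ⟩ => ⟨fun k => ∑ t, Z k t * β t, fun t => ?_⟩⟩
  let Gr : Matrix τ κ ℝ := G.map Int.cast
  let Hr : Matrix κ τ ℝ := H.map (Rat.castHom ℝ)
  have hGr : Gr = Gq.map (Rat.castHom ℝ) := by ext; simp [Gr, Gq]
  have hr : Gr * Hr * Gr = Gr := by
    rw [hGr, ← Matrix.map_mul, ← Matrix.map_mul, hGHG]
  have hβ : Gr.mulVec μ = fun t => (β t : ℝ) := by
    ext t; simp [Matrix.mulVec, dotProduct, Gr, hμ]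
  have hsol : Gr.mulVec (Hr.mulVec fun t => (β t : ℝ)) = fun t => (β t : ℝ) := by
    rw [← hβ, Matrix.mulVec_mulVec, Matrix.mulVec_mulVec, hr]
  have hZr : ∀ k t, (Z k t : ℝ) = q * Hr k t := fun k t => by
    have := congrArg (Rat.cast : ℚ → ℝ) (hZ k t)
    simpa [Hr] using this
  have := congrFun hsol t
  simp only [Matrix.mulVec, dotProduct] at this
  have key : ((∑ k, G t k * ∑ t, Z k t * β t : ℤ) : ℝ) = ((q * β t : ℤ) : ℝ) := by
    push_cast
    rw [← this, Finset.mul_sum]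
    refine Finset.sum_congr rfl fun k _ => ?_
    simp only [hZr, Finset.mul_sum, Gr, Matrix.map_apply]
    exact Finset.sum_congr rfl fun t _ => by ring
  exact_mod_cast key

/-- A linear image of the nonnegative points of an affine subspace of `ℝ^E` has an extended
formulation of size `|E|`. -/
lemma isEF_of_nonneg_image {ι E X : Type} [Fintype ι] [Fintype E] [AddCommGroup X] [Module ℝ X]
    [FiniteDimensional ℝ X] {P : Set (ι → ℝ)} (L : (E → ℝ) →ₗ[ℝ] X) (d : X)
    (π : (E → ℝ) →ₗ[ℝ] (ι → ℝ)) (h : π '' {f | (∀ e, 0 ≤ f e) ∧ L f = d} = P) :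
    IsEF P (Fintype.card E) := by
  classical
  let σ := Fintype.equivFin E
  let ρ : (Fin (Fintype.card E) → ℝ) ≃ₗ[ℝ] (E → ℝ) := LinearEquiv.funCongrLeft ℝ ℝ σ
  let B := Module.finBasis ℝ X
  let L' : (Fin (Fintype.card E) → ℝ) →ₗ[ℝ] (Fin (Module.finrank ℝ X) → ℝ) :=
    B.equivFun.toLinearMap ∘ₗ L ∘ₗ ρ.toLinearMap
  refine ⟨Fintype.card E, Module.finrank ℝ X, -1, 0, LinearMap.toMatrix' L', B.equivFun d,
    (π ∘ₗ ρ.toLinearMap).toAffineMap, ?_⟩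
  have hset : {y : Fin (Fintype.card E) → ℝ |
      (∀ r, (-1 : Matrix _ _ ℝ).mulVec y r ≤ (0 : Fin (Fintype.card E) → ℝ) r) ∧
      (∀ r, (LinearMap.toMatrix' L').mulVec y r = B.equivFun d r)} =
      ρ ⁻¹' {f | (∀ e, 0 ≤ f e) ∧ L f = d} := by
    ext y
    simp only [Set.mem_ofPred_eq, Set.mem_preimage, LinearMap.toMatrix'_mulVec]
    refine and_congr ?_ ?_
    · rw [← σ.forall_congr_right]
      simp [ρ, Matrix.neg_mulVec, LinearEquiv.funCongrLeft_apply, LinearMap.funLeft_apply]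
    · rw [← funext_iff]
      simp [L']
  rw [hset, ← h]
  have : (⇑(π ∘ₗ ρ.toLinearMap).toAffineMap) = π ∘ ρ := rfl
  rw [this, Set.image_comp, Set.image_preimage_eq _ ρ.surjective]

/-- The 0/1 vector of an assignment. -/
def assignVec {m : ℕ} {κ : Type} [DecidableEq κ] (v : Fin m → κ) : Fin m × κ → ℝ :=
  fun q => if v q.1 = q.2 then 1 else 0

/-- Path decomposition of a flow in the layered network whose states are the elements of `S` and
in which using `c` moves from `s` to `s + g c`. -/
lemma exists_path_decomposition {S κ : Type} [Fintype S] [DecidableEq S] [AddCommGroup S]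
    [Fintype κ] [DecidableEq κ] (g : κ → S) (r : S) :
    ∀ (m : ℕ) (f : Fin m → S → κ → ℝ) (h : Fin (m + 1) → S → ℝ),
      (∀ i s c, 0 ≤ f i s c) → (∀ i s, 0 ≤ h i s) →
      (∀ i s, ∑ c, f i s c = h i.castSucc s) →
      (∀ i s, ∑ c, f i (s - g c) c = h i.succ s) →
      (∀ s, s ≠ r → h (Fin.last m) s = 0) →
      ∃ w : S → (Fin m → κ) → ℝ, (∀ s v, 0 ≤ w s v) ∧
        (∀ s v, w s v ≠ 0 → s + ∑ i, g (v i) = r) ∧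
        (∀ s, ∑ v, w s v = h 0 s) ∧
        (∀ i c, ∑ s, ∑ v, w s v * assignVec v (i, c) = ∑ s, f i s c) := by
  intro m
  induction m with
  | zero =>
    intro f h hf hh h1 h2 hr
    refine ⟨fun s _ => h 0 s, fun s _ => hh 0 s, fun s v hs => ?_, fun s => by simp, fun i => i.elim0⟩
    by_contra hne
    exact hs (hr s (by simpa using hne))
  | succ m ih =>
    intro f h hf hh h1 h2 hr
    obtain ⟨w, hw0, hwr, hwh, hwf⟩ := ih (fun i => f i.succ) (fun i => h i.succ)
      (fun i => hf _) (fun i => hh _) (fun i s => by simpa using h1 i.succ s)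
      (fun i s => h2 i.succ s) (fun s hs => by simpa using hr s hs)
    let F : S → κ → (Fin m → κ) → ℝ := fun s c u => f 0 s c * (w (s + g c) u / h 1 (s + g c))
    have hle : ∀ s c, f 0 s c ≤ h 1 (s + g c) := by
      intro s c
      have := h2 0 (s + g c)
      simp only [Fin.succ_zero_eq_one] at this
      rw [← this]
      have := Finset.single_le_sum (f := fun c' => f 0 (s + g c - g c') c')
        (fun c' _ => hf 0 _ _) (mem_univ c)
      simpa using this
    have hFsum : ∀ s c, ∑ u, F s c u = f 0 s c := by
      intro s c
      simp only [F]
      rw [← Finset.mul_sum, ← Finset.sum_div, hwh]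
      rcases eq_or_ne (h 1 (s + g c)) 0 with h0 | h0
      · have : f 0 s c = 0 := le_antisymm (h0 ▸ hle s c) (hf _ _ _)
        simp [this]
      · simp only [Fin.succ_zero_eq_one]
        rw [div_self h0, mul_one]
    have hsplit : ∀ G : (Fin (m + 1) → κ) → ℝ,
        ∑ v, G v = ∑ c, ∑ u : Fin m → κ, G (Fin.cons c u) := by
      intro G
      rw [← Fintype.sum_prod_type', ← (Fin.consEquiv fun _ => κ).sum_comp]
      rfl
    refine ⟨fun s v => F s (v 0) (Fin.tail v), fun s v => ?_, fun s v hv => ?_, fun s => ?_,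
      fun i c => ?_⟩
    · exact mul_nonneg (hf _ _ _) (div_nonneg (hw0 _ _) (hh _ _))
    · have : w (s + g (v 0)) (Fin.tail v) ≠ 0 := by
        intro h0
        exact hv (by simp [F, h0])
      rw [Fin.sum_univ_succ, ← add_assoc]
      exact hwr _ _ this
    · rw [hsplit]
      simp only [Fin.cons_zero, Fin.tail_cons, hFsum]
      simpa using h1 0 s
    · simp only [hsplit, Fin.cons_zero, Fin.tail_cons]
      refine Fin.cases ?_ (fun i => ?_) i
      · refine Finset.sum_congr rfl fun s _ => ?_
        simp [assignVec, hFsum]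
      · have hA : ∀ (c' : κ) (u : Fin m → κ),
            assignVec (Fin.cons c' u : Fin (m + 1) → κ) (i.succ, c) = assignVec u (i, c) := by
          intro c' u; simp [assignVec]
        simp only [hA]
        rw [← hwf i c, Finset.sum_comm]
        have hshift : ∀ c', ∑ s, ∑ u, F s c' u * assignVec u (i, c) =
            ∑ s, ∑ u, f 0 (s - g c') c' * (w s u / h 1 s) * assignVec u (i, c) := by
          intro c'
          rw [← (Equiv.subRight (g c')).sum_comp]
          simp [F]
        simp only [hshift]
        rw [Finset.sum_comm]
        refine Finset.sum_congr rfl fun s _ => ?_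
        rw [Finset.sum_comm]
        refine Finset.sum_congr rfl fun u _ => ?_
        rw [← Finset.sum_mul, ← Finset.sum_mul, h2 0 s]
        congr 1
        rcases eq_or_ne (h 1 s) 0 with h0 | h0
        · have : w s u ≤ ∑ u, w s u :=
            Finset.single_le_sum (f := fun u => w s u) (fun u _ => hw0 s u) (mem_univ u)
          rw [hwh, Fin.succ_zero_eq_one, h0] at this
          simp [le_antisymm this (hw0 s u)]
        · simp only [Fin.succ_zero_eq_one]
          field_simp

/-- A nonnegative matrix with unit row sums and integral column sums is a convex combination of
assignments with the same column sums. -/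
lemma mem_convexHull_of_integral_colSum {m : ℕ} {κ : Type} [Fintype κ] [DecidableEq κ]
    (y : Fin m × κ → ℝ) (hy : ∀ q, 0 ≤ y q) (hrow : ∀ i, ∑ c, y (i, c) = 1) (X : κ → ℕ)
    (hcol : ∀ c, ∑ i, y (i, c) = X c) :
    y ∈ convexHull ℝ (assignVec '' {v : Fin m → κ | ∀ c, ∑ i, assignVec v (i, c) = X c}) := by
  have hcard : Fintype.card (Σ c, Fin (X c)) = Fintype.card (Fin m) := by
    simp only [Fintype.card_sigma, Fintype.card_fin]
    have : ((∑ c, X c : ℕ) : ℝ) = (m : ℕ) := by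
      push_cast
      simp only [← hcol]
      rw [Finset.sum_comm]
      simp [hrow]
    exact_mod_cast this
  let σ : Fin m ≃ (Σ c, Fin (X c)) := (Fintype.equivOfCardEq hcard).symm
  have hzero : ∀ i c, X c = 0 → y (i, c) = 0 := by
    intro i c h
    have h1 : y (i, c) ≤ ∑ i, y (i, c) :=
      Finset.single_le_sum (f := fun i => y (i, c)) (fun i _ => hy _) (mem_univ i)
    rw [hcol, h] at h1
    exact le_antisymm (by simpa using h1) (hy _)
  let M : Matrix (Fin m) (Fin m) ℝ := fun i j => y (i, (σ j).1) / X (σ j).1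
  have hrowM : ∀ (i : Fin m) (c : κ), ∑ k : Fin (X c), y (i, c) / X c = y (i, c) := by
    intro i c
    rcases Nat.eq_zero_or_pos (X c) with h | h
    · have := hzero i c h
      simp [this]
    · have : (X c : ℝ) ≠ 0 := by positivity
      simp only [sum_const, card_univ, Fintype.card_fin, nsmul_eq_mul]
      field_simp
  have hM : M ∈ doublyStochastic ℝ (Fin m) := by
    rw [mem_doublyStochastic_iff_sum]
    refine ⟨fun i j => div_nonneg (hy _) (Nat.cast_nonneg _), fun i => ?_, fun j => ?_⟩
    · have : ∑ j, M i j = ∑ k : (Σ c, Fin (X c)), y (i, k.1) / X k.1 :=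
        σ.sum_comp (fun k => y (i, k.1) / X k.1)
      rw [this, Fintype.sum_sigma]
      simp only [hrowM, hrow]
    · have : 0 < X (σ j).1 := Fin.pos (σ j).2
      have : (X (σ j).1 : ℝ) ≠ 0 := by positivity
      simp only [M]
      rw [← Finset.sum_div, hcol, div_self this]
  obtain ⟨w, hw0, hw1, hw⟩ := exists_eq_sum_perm_of_mem_doublyStochastic hM
  have hy' : y = ∑ p, w p • assignVec (fun i => (σ (p i)).1) := by
    ext ⟨i, c⟩
    have h1 : y (i, c) = ∑ j, M i j * if (σ j).1 = c then 1 else 0 := by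
      have : ∑ j, M i j * (if (σ j).1 = c then 1 else 0) = ∑ k : (Σ c, Fin (X c)),
          y (i, k.1) / X k.1 * if k.1 = c then 1 else 0 :=
        σ.sum_comp (fun k => y (i, k.1) / X k.1 * if k.1 = c then 1 else 0)
      rw [this, Fintype.sum_sigma, Finset.sum_eq_single c]
      · simpa using (hrowM i c).symm
      · intro c' _ h
        simp [h]
      · simp
    rw [h1, ← hw]
    simp only [Matrix.sum_apply, Matrix.smul_apply, Equiv.Perm.permMatrix, Finset.sum_apply,
      Pi.smul_apply, smul_eq_mul, Finset.sum_mul]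
    rw [Finset.sum_comm]
    refine Finset.sum_congr rfl fun p _ => ?_
    simp only [PEquiv.toMatrix_apply, assignVec]
    rw [Finset.sum_eq_single (p i)]
    · simp
    · intro j _ h
      simp [h.symm]
    · simp
  rw [hy']
  refine (convex_convexHull ℝ _).sum_mem (fun p _ => hw0 p) hw1 fun p _ => ?_
  refine subset_convexHull ℝ _ ⟨_, fun c => ?_, rfl⟩
  have h1 : ∑ i, assignVec (fun i => (σ (p i)).1) (i, c) =
      ∑ k : (Σ c, Fin (X c)), if k.1 = c then (1 : ℝ) else 0 := by
    rw [← (p.trans σ).sum_comp]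
    rfl
  rw [h1, Fintype.sum_sigma, Finset.sum_eq_single c]
  · simp
  · intro c' _ h
    simp [h]
  · simp

/-- Membership in the convex hull of a finite family, in terms of weights on the index type. -/
lemma mem_convexHull_image_iff_exists_weights {α ι : Type} [Fintype α] (φ : α → ι → ℝ) (F : Set α)
    (y : ι → ℝ) :
    y ∈ convexHull ℝ (φ '' F) ↔ ∃ w : α → ℝ, (∀ a, 0 ≤ w a) ∧ (∀ a, w a ≠ 0 → a ∈ F) ∧
      ∑ a, w a = 1 ∧ y = ∑ a, w a • φ a := by
  classical
  constructor
  · intro hy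
    refine convexHull_min (t := {y | ∃ w : α → ℝ, (∀ a, 0 ≤ w a) ∧ (∀ a, w a ≠ 0 → a ∈ F) ∧
      ∑ a, w a = 1 ∧ y = ∑ a, w a • φ a}) ?_ ?_ hy
    · rintro _ ⟨a, ha, rfl⟩
      refine ⟨Pi.single a 1, fun b => ?_, fun b hb => ?_, by simp, by simp [Pi.single_apply]⟩
      · rcases eq_or_ne b a with rfl | h <;> simp [*]
      · rcases eq_or_ne b a with rfl | h
        · exact ha
        · simp [h] at hb
    · rintro _ ⟨w, hw0, hwF, hw1, rfl⟩ _ ⟨w', hw0', hwF', hw1', rfl⟩ s t hs ht hst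
      refine ⟨fun a => s * w a + t * w' a, fun a => ?_, fun a ha => ?_, ?_, ?_⟩
      · have := hw0 a; have := hw0' a; positivity
      · by_contra hF
        have h1 : w a = 0 := by by_contra h; exact hF (hwF a h)
        have h2 : w' a = 0 := by by_contra h; exact hF (hwF' a h)
        simp [h1, h2] at ha
      · rw [Finset.sum_add_distrib, ← Finset.mul_sum, ← Finset.mul_sum, hw1, hw1']
        simpa using hst
      · simp only [Finset.smul_sum, add_smul, Finset.sum_add_distrib, mul_smul]
  · rintro ⟨w, hw0, hwF, hw1, rfl⟩
    rw [← Finset.sum_subset (Finset.subset_univ (univ.filter fun a => w a ≠ 0))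
      (fun a _ ha => by
        have : w a = 0 := by simpa using ha
        simp [this])]
    refine (convex_convexHull ℝ _).sum_mem (fun a _ => hw0 a) ?_ fun a ha => ?_
    · rw [← hw1]
      exact Finset.sum_subset (Finset.subset_univ _) fun a _ ha => by simpa using ha
    · exact subset_convexHull ℝ _ ⟨a, hwF a (by simpa using ha), rfl⟩

section Exchange

variable {m : ℕ} {κ : Type} [DecidableEq κ]

/-- The number of machines using `c`. -/
def useCount (v : Fin m → κ) (c : κ) : ℤ := ∑ i, if v i = c then 1 else 0

/-- The real vector of usage numbers. -/
def useVec (v : Fin m → κ) : κ → ℝ := fun c => useCount v c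

lemma sum_assignVec (v : Fin m → κ) (c : κ) : ∑ i, assignVec v (i, c) = useVec v c := by
  simp [assignVec, useVec, useCount]

/-- If `v` and `v'` differ on many machines in the same way, then swapping `K` of those machines
changes the usage numbers by `K` times a vector with entries in `{-1, 0, 1}`. -/
lemma exists_exchange {K : ℕ} (v v' : Fin m → κ) {c c' : κ}
    (hcc : c ≠ c') (hK : K ≤ #{i | v i = c ∧ v' i = c'}) :
    ∃ v₁ v₂ : Fin m → κ,
      (∀ i, assignVec v₁ i + assignVec v₂ i = assignVec v i + assignVec v' i) ∧
      (∀ d, useCount v₁ d = useCount v d +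
        K * ((if d = c' then 1 else 0) - (if d = c then 1 else 0))) ∧
      (∀ d, useCount v₂ d = useCount v' d -
        K * ((if d = c' then 1 else 0) - (if d = c then 1 else 0))) ∧
      #{i | v₁ i ≠ v' i} + K = #{i | v i ≠ v' i} := by
  obtain ⟨U, hU, hUK⟩ := Finset.exists_subset_card_eq hK
  have hUc : ∀ i ∈ U, v i = c ∧ v' i = c' := fun i hi => by simpa using hU hi
  have hcount : ∀ d, ∑ i ∈ U, (((if v' i = d then 1 else 0) - (if v i = d then 1 else 0) : ℤ)) =
      K * ((if d = c' then 1 else 0) - (if d = c then 1 else 0)) := by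
    intro d
    rw [Finset.sum_congr rfl (g := fun _ => ((if d = c' then 1 else 0) - (if d = c then 1 else 0)))
      (fun i hi => by simp only [(hUc i hi).1, (hUc i hi).2, @eq_comm _ d])]
    rw [Finset.sum_const, hUK, nsmul_eq_mul]
  refine ⟨fun i => if i ∈ U then v' i else v i, fun i => if i ∈ U then v i else v' i,
    fun q => ?_, fun d => ?_, fun d => ?_, ?_⟩
  · by_cases h : q.1 ∈ U <;> simp [assignVec, h, add_comm]
  · rw [← hcount, ← sub_eq_iff_eq_add']
    simp only [useCount]
    rw [← Finset.sum_sub_distrib, ← Finset.sum_subset (Finset.subset_univ U)]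
    · exact Finset.sum_congr rfl fun i hi => by simp [hi]
    · intro i _ hi; simp [hi]
  · rw [← hcount, eq_sub_iff_add_eq, ← eq_sub_iff_add_eq', eq_comm]
    simp only [useCount]
    rw [← Finset.sum_sub_distrib, ← Finset.sum_subset (Finset.subset_univ U)]
    · exact Finset.sum_congr rfl fun i hi => by simp [hi]
    · intro i _ hi; simp [hi]
  · rw [← hUK, ← Finset.card_union_of_disjoint]
    · congr 1
      ext i
      by_cases h : i ∈ U
      · simp [h, (hUc i h).1, (hUc i h).2, hcc]
      · simp [h]
    · rw [Finset.disjoint_left]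
      intro i hi hiU
      simp [hiU] at hi

/-- If no exchange of size `K` is possible, the usage numbers are close. -/
lemma useCount_sub_le [Fintype κ] {K : ℕ} (v v' : Fin m → κ)
    (h : ∀ c c', c ≠ c' → #{i | v i = c ∧ v' i = c'} ≤ K) (d : κ) :
    useCount v d - useCount v' d ≤ Fintype.card κ * K := by
  have h1 : useCount v d - useCount v' d ≤
      ∑ c' ∈ univ.erase d, (#{i | v i = d ∧ v' i = c'} : ℤ) := by
    have : ∀ c', (#{i | v i = d ∧ v' i = c'} : ℤ) = ∑ i, if v i = d ∧ v' i = c' then 1 else 0 := by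
      intro c'; simp
    simp only [this]
    rw [Finset.sum_comm, useCount, useCount, ← Finset.sum_sub_distrib]
    refine Finset.sum_le_sum fun i _ => ?_
    have hnn : ∀ c' ∈ univ.erase d, (0 : ℤ) ≤ if v i = d ∧ v' i = c' then 1 else 0 :=
      fun c' _ => by split_ifs <;> simp
    by_cases hd : v' i = d
    · have := Finset.sum_nonneg hnn
      refine le_trans ?_ this
      split_ifs <;> simp
    · by_cases hv : v i = d
      · have := Finset.single_le_sum hnn (a := v' i) (by simpa using hd)
        simp [hv, hd] at this ⊢
      · simp [hv, hd]
  refine h1.trans ?_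
  calc _ ≤ ∑ _c' ∈ univ.erase d, (K : ℤ) := Finset.sum_le_sum fun c' hc' => by
        exact_mod_cast h d c' (Finset.ne_of_mem_erase hc').symm
    _ ≤ ∑ _c' : κ, (K : ℤ) := Finset.sum_le_sum_of_subset_of_nonneg (Finset.erase_subset _ _)
        fun _ _ _ => by positivity
    _ = _ := by simp

end Exchange

section Extreme

variable {m T : ℕ} {κ : Type} [Fintype κ] [DecidableEq κ]

/-- Among all representations of `y` as a convex combination of points of a finite family there is
one of largest support; its support is closed under exchanges. -/
lemma exists_weights_closed_under_exchange (F : Set (Fin m → κ)) {y : Fin m × κ → ℝ}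
    (hy : y ∈ convexHull ℝ (assignVec '' F)) :
    ∃ w : (Fin m → κ) → ℝ, (∀ v, 0 ≤ w v) ∧ (∀ v, w v ≠ 0 → v ∈ F) ∧ ∑ v, w v = 1 ∧
      y = ∑ v, w v • assignVec v ∧
      ∀ v v' v₁ v₂, w v ≠ 0 → w v' ≠ 0 → v₁ ∈ F → v₂ ∈ F →
        (∀ q, assignVec v₁ q + assignVec v₂ q = assignVec v q + assignVec v' q) → w v₁ ≠ 0 := by
  let Pw : ((Fin m → κ) → ℝ) → Prop := fun w => (∀ v, 0 ≤ w v) ∧ (∀ v, w v ≠ 0 → v ∈ F) ∧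
    ∑ v, w v = 1 ∧ y = ∑ v, w v • assignVec v
  let A : Set ℕ := {n | ∃ w, Pw w ∧ #{v | w v ≠ 0} = n}
  have hne : A.Nonempty := by
    obtain ⟨w, hw⟩ := (mem_convexHull_image_iff_exists_weights _ _ _).1 hy
    exact ⟨_, w, hw, rfl⟩
  have hbdd : BddAbove A := ⟨Fintype.card (Fin m → κ), by
    rintro _ ⟨w, _, rfl⟩
    exact Finset.card_le_univ _⟩
  obtain ⟨w, hw, hwA⟩ := Nat.sSup_mem hne hbdd
  obtain ⟨hw0, hwF, hw1, hwy⟩ := hw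
  refine ⟨w, hw0, hwF, hw1, hwy, fun v v' v₁ v₂ hv hv' h₁ h₂ hsum hzero => ?_⟩
  have hvpos := lt_of_le_of_ne (hw0 v) hv.symm
  have hvpos' := lt_of_le_of_ne (hw0 v') hv'.symm
  set ε := min (w v) (w v') / 4 with hε
  have hεpos : 0 < ε := by have := lt_min hvpos hvpos'; positivity
  have hεv : ε ≤ w v / 4 := by have := min_le_left (w v) (w v'); linarith
  have hεv' : ε ≤ w v' / 4 := by have := min_le_right (w v) (w v'); linarith
  let δ : (Fin m → κ) → (Fin m → κ) → ℝ := fun u a => if a = u then 1 else 0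
  let w' : (Fin m → κ) → ℝ := fun a => w a + ε * (δ v₁ a + δ v₂ a - δ v a - δ v' a)
  have hδ : ∀ u a, 0 ≤ δ u a := fun u a => by simp only [δ]; split_ifs <;> simp
  have e1 : ∀ a, ε * δ v a ≤ w a / 4 := fun a => by
    simp only [δ]; split_ifs with h
    · subst h; linarith
    · have := hw0 a; linarith
  have e2 : ∀ a, ε * δ v' a ≤ w a / 4 := fun a => by
    simp only [δ]; split_ifs with h
    · subst h; linarith
    · have := hw0 a; linarith
  have hlow : ∀ a, w a / 2 + ε * δ v₁ a ≤ w' a := fun a => by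
    have := mul_nonneg hεpos.le (hδ v₂ a)
    have := e1 a; have := e2 a
    simp only [w']
    linarith
  have hδsum : ∀ (u : Fin m → κ) (G : (Fin m → κ) → ℝ), ∑ a, δ u a * G a = G u := by
    intro u G; simp [δ]
  have hδ1 : ∀ u : Fin m → κ, ∑ a, δ u a = 1 := fun u => by simp [δ]
  have hw' : Pw w' := by
    refine ⟨fun a => ?_, fun a ha => ?_, ?_, ?_⟩
    · have := mul_nonneg hεpos.le (hδ v₁ a)
      linarith [hlow a, hw0 a]
    · by_contra hF
      apply ha
      have h0 : ∀ u, u ∈ F → δ u a = 0 := fun u hu => by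
        simp only [δ]; rw [if_neg]; rintro rfl; exact hF hu
      have : w a = 0 := by by_contra h; exact hF (hwF a h)
      simp [w', this, h0 _ h₁, h0 _ h₂, h0 _ (hwF _ hv), h0 _ (hwF _ hv')]
    · simp only [w', Finset.sum_add_distrib, Finset.sum_sub_distrib, ← Finset.mul_sum, hδ1, hw1]
      ring
    · ext q
      rw [hwy]
      simp only [Finset.sum_apply, Pi.smul_apply, smul_eq_mul, w', add_mul, sub_mul, mul_assoc,
        Finset.sum_add_distrib, Finset.sum_sub_distrib, ← Finset.mul_sum, hδsum]
      rw [hsum q]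
      ring
  have hlt : #{a | w a ≠ 0} < #{a | w' a ≠ 0} := by
    refine Finset.card_lt_card ((Finset.ssubset_iff_of_subset fun a ha => ?_).2 ⟨v₁, ?_, ?_⟩)
    · have ha : w a ≠ 0 := by simpa using ha
      have h1 := lt_of_le_of_ne (hw0 a) ha.symm
      have h2 := mul_nonneg hεpos.le (hδ v₁ a)
      have : 0 < w' a := by linarith [hlow a]
      simpa using this.ne'
    · have h2 : ε * δ v₁ v₁ = ε := by simp [δ]
      have : 0 < w' v₁ := by linarith [hlow v₁, hw0 v₁]
      simpa using this.ne'
    · simpa using hzero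
  have := le_csSup hbdd (show #{a | w' a ≠ 0} ∈ A from ⟨w', hw', rfl⟩)
  omega

/-- The key integrality property: inside a residue class of usage numbers modulo a suitable `K`,
extreme points of the section by the demand equations have integral usage numbers. -/
lemma colSum_integral_of_mem_extremePoints (a : κ → Fin T → ℤ) (b : Fin T → ℤ) {K : ℕ}
    (hK0 : 0 < K)
    (hK : ∀ D : Finset (κ → ℤ), (∀ d ∈ D, ∀ c, |d c| ≤ Fintype.card κ) → ∀ β : Fin T → ℤ,
      (∃ μ : (κ → ℤ) → ℝ, ∀ t, ∑ d ∈ D, μ d * ∑ c, (a c t : ℝ) * d c = β t) →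
      ∃ ν : (κ → ℤ) → ℤ, ∀ t, ∑ d ∈ D, ν d * ∑ c, a c t * d c = K * β t)
    (F : Set (Fin m → κ))
    (hF : ∀ v ∈ F, ∀ v', v' ∈ F ↔ ∀ c, (K : ℤ) ∣ useCount v' c - useCount v c)
    (hFb : ∀ v ∈ F, ∀ t, (K : ℤ) ∣ b t - ∑ c, a c t * useCount v c)
    {y : Fin m × κ → ℝ}
    (hy : y ∈ (convexHull ℝ (assignVec '' F) ∩
      {y | ∀ t, ∑ c, (a c t : ℝ) * ∑ i, y (i, c) = b t}).extremePoints ℝ) :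
    ∃ X : κ → ℤ, ∀ c, ∑ i, y (i, c) = X c := by
  classical
  rw [mem_extremePoints_iff_left] at hy
  obtain ⟨⟨hyW, hyb⟩, hext⟩ := hy
  obtain ⟨w, hw0, hwF, hw1, hwy, hclosed⟩ := exists_weights_closed_under_exchange F hyW
  have hKr : (K : ℝ) ≠ 0 := by positivity
  let D : Finset (κ → ℤ) := {d ∈ Fintype.piFinset fun _ => Finset.Icc (-(Fintype.card κ : ℤ))
    (Fintype.card κ) | ∃ v v', w v ≠ 0 ∧ w v' ≠ 0 ∧ ∀ c, useCount v' c - useCount v c = K * d c}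
  let cst : (κ → ℤ) → κ → ℝ := fun d c => d c
  let Sp := Submodule.span ℝ (cst '' D)
  have hmemD : ∀ (d : κ → ℤ) v v', (∀ c, |d c| ≤ Fintype.card κ) → w v ≠ 0 → w v' ≠ 0 →
      (∀ c, useCount v' c - useCount v c = K * d c) → useVec v' - useVec v ∈ Sp := by
    intro d v v' hd hv hv' h
    have hdD : d ∈ D := by
      simp only [D, Finset.mem_filter, Fintype.mem_piFinset, Finset.mem_Icc]
      exact ⟨fun c => abs_le.1 (hd c), v, v', hv, hv', h⟩
    have : useVec v' - useVec v = (K : ℝ) • cst d := by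
      ext c
      have := congrArg (Int.cast : ℤ → ℝ) (h c)
      push_cast at this
      simpa [useVec, cst] using this
    rw [this]
    exact Submodule.smul_mem _ _ (Submodule.subset_span ⟨d, hdD, rfl⟩)
  have hspan : ∀ n : ℕ, ∀ v v', w v ≠ 0 → w v' ≠ 0 → #{i | v i ≠ v' i} = n →
      useVec v' - useVec v ∈ Sp := by
    intro n
    induction n using Nat.strong_induction_on with
    | _ n ih =>
    intro v v' hv hv' hn
    by_cases hex : ∃ c c', c ≠ c' ∧ K ≤ #{i | v i = c ∧ v' i = c'}
    · obtain ⟨c, c', hcc, hle⟩ := hex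
      obtain ⟨v₁, v₂, hsum, hc₁, hc₂, hlt⟩ := exists_exchange v v' hcc hle
      have h₁ : v₁ ∈ F := (hF v (hwF v hv) v₁).2 fun d => by rw [hc₁]; simp
      have h₂ : v₂ ∈ F := (hF v' (hwF v' hv') v₂).2 fun d => by rw [hc₂]; simp
      have hwv₁ := hclosed v v' v₁ v₂ hv hv' h₁ h₂ hsum
      have e1 := ih _ (by omega) v₁ v' hwv₁ hv' rfl
      have e2 := hmemD (fun d => (if d = c' then 1 else 0) - (if d = c then 1 else 0)) v v₁
        (fun d => by
          have : 0 < Fintype.card κ := Fintype.card_pos_iff.2 ⟨c⟩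
          split_ifs <;> simp <;> omega) hv hwv₁ (fun d => by rw [hc₁]; ring)
      have := Sp.add_mem e1 e2
      simpa using this
    · push Not at hex
      have hdvd := (hF v (hwF v hv) v').1 (hwF v' hv')
      choose d hd using hdvd
      refine hmemD d v v' (fun c => ?_) hv hv' hd
      have hKz : (0 : ℤ) < K := by exact_mod_cast hK0
      have h1 := useCount_sub_le v v' (K := K) (fun c c' h => (hex c c' h).le) c
      have h2 := useCount_sub_le v' v (K := K) (fun c c' h => by
        have := (hex c' c h.symm).le
        simpa only [and_comm] using this) c
      rw [hd c, mul_comm] at h2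
      have h1' : -d c * K ≤ Fintype.card κ * K := by linarith [hd c]
      exact abs_le.2 ⟨by linarith [le_of_mul_le_mul_right h1' hKz], le_of_mul_le_mul_right h2 hKz⟩
  have hrep : ∀ u ∈ Sp, ∃ c : (Fin m → κ) → ℝ, (∀ v, w v = 0 → c v = 0) ∧ ∑ v, c v = 0 ∧
      u = ∑ v, c v • useVec v := by
    intro u hu
    induction hu using Submodule.span_induction with
    | mem x hx =>
      obtain ⟨d, hd, rfl⟩ := hx
      simp only [D, Finset.coe_filter, Set.mem_ofPred_eq] at hd
      obtain ⟨-, v, v', hv, hv', h⟩ := hd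
      refine ⟨(K : ℝ)⁻¹ • (Pi.single v' 1 - Pi.single v 1), fun a ha => ?_, ?_, ?_⟩
      · have h1 : a ≠ v := by rintro rfl; exact hv ha
        have h2 : a ≠ v' := by rintro rfl; exact hv' ha
        simp [h1, h2]
      · simp [← Finset.mul_sum]
      · ext c
        have := congrArg (Int.cast : ℤ → ℝ) (h c)
        push_cast at this
        simp only [Pi.smul_apply, Pi.sub_apply, smul_eq_mul, mul_sub, sub_smul,
          Finset.sum_sub_distrib, Pi.single_apply, mul_ite, mul_one, mul_zero, ite_smul, zero_smul,
          Finset.sum_ite_eq', mem_univ, if_true, useVec, cst]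
        rw [← mul_sub, this]
        field_simp
    | zero => exact ⟨0, by simp, by simp, by simp⟩
    | add x z _ _ hx hz =>
      obtain ⟨c, h1, h2, rfl⟩ := hx
      obtain ⟨c', h1', h2', rfl⟩ := hz
      refine ⟨c + c', fun v hv => by simp [h1 v hv, h1' v hv], ?_, ?_⟩
      · simp [Finset.sum_add_distrib, h2, h2']
      · simp [Finset.sum_add_distrib, add_smul]
    | smul s x _ hx =>
      obtain ⟨c, h1, h2, rfl⟩ := hx
      refine ⟨s • c, fun v hv => by simp [h1 v hv], ?_, ?_⟩
      · simp [← Finset.mul_sum, h2]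
      · simp [Finset.smul_sum, mul_smul]
  have hcol : ∀ (c : (Fin m → κ) → ℝ) k,
      ∑ i, (∑ v, c v • assignVec v) (i, k) = (∑ v, c v • useVec v) k := by
    intro c k
    simp only [Finset.sum_apply, Pi.smul_apply, smul_eq_mul]
    rw [Finset.sum_comm]
    simp only [← Finset.mul_sum, sum_assignVec]
  have hinj : ∀ u ∈ Sp, (∀ t, ∑ c, (a c t : ℝ) * u c = 0) → u = 0 := by
    intro u hu hA
    obtain ⟨c, hc0, hcsum, rfl⟩ := hrep u hu
    obtain ⟨ε, hε, hεc⟩ : ∃ ε : ℝ, 0 < ε ∧ ∀ v, ε * |c v| ≤ w v := by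
      have hC : ∀ v, |c v| < ∑ v, |c v| + 1 := fun v =>
        lt_of_le_of_lt (Finset.single_le_sum (f := fun v => |c v|) (fun v _ => abs_nonneg _)
          (mem_univ v)) (lt_add_one _)
      obtain ⟨v₀, hv₀⟩ : ∃ v, w v ≠ 0 := by
        by_contra! h
        simp [h] at hw1
      obtain ⟨u, hu, hmin⟩ := Finset.exists_min_image {v | w v ≠ 0} w ⟨v₀, by simpa using hv₀⟩
      have hu : w u ≠ 0 := by simpa using hu
      have hupos := lt_of_le_of_ne (hw0 u) hu.symm
      have hCpos : 0 < ∑ v, |c v| + 1 := lt_of_le_of_lt (abs_nonneg _) (hC v₀)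
      refine ⟨w u / (∑ v, |c v| + 1), by positivity, fun v => ?_⟩
      by_cases hv : w v = 0
      · simp [hc0 v hv, hv]
      · refine le_trans ?_ (hmin v (by simpa using hv))
        rw [div_mul_eq_mul_div, div_le_iff₀ hCpos]
        exact mul_le_mul_of_nonneg_left (hC v).le hupos.le
    let z : Fin m × κ → ℝ := ∑ v, c v • assignVec v
    have hmem : ∀ s : ℝ, |s| = ε → y + s • z ∈ convexHull ℝ (assignVec '' F) ∩
        {y | ∀ t, ∑ c, (a c t : ℝ) * ∑ i, y (i, c) = b t} := by
      intro s hs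
      refine ⟨(mem_convexHull_image_iff_exists_weights _ _ _).2 ⟨fun v => w v + s * c v,
        fun v => ?_, fun v hv => ?_, ?_, ?_⟩, fun t => ?_⟩
      · have h1 := hεc v
        rw [← hs, ← abs_mul] at h1
        linarith [neg_abs_le (s * c v)]
      · apply hwF
        intro h
        exact hv (by simp [h, hc0 v h])
      · rw [Finset.sum_add_distrib, ← Finset.mul_sum, hcsum, hw1]; simp
      · simp only [z, hwy, add_smul, Finset.sum_add_distrib, mul_smul, Finset.smul_sum]
      · simp only [Pi.add_apply, Pi.smul_apply, smul_eq_mul, Finset.sum_add_distrib,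
          ← Finset.mul_sum, mul_add]
        rw [hyb t]
        have : ∀ x, ∑ i, z (i, x) = (∑ v, c v • useVec v) x := hcol c
        simp only [this]
        have h2 : ∑ x, (a x t : ℝ) * (s * (∑ v, c v • useVec v) x) =
            s * ∑ x, (a x t : ℝ) * (∑ v, c v • useVec v) x := by
          rw [Finset.mul_sum]
          exact Finset.sum_congr rfl fun x _ => by ring
        rw [h2, hA t]; simp
    have h := hext _ (hmem ε (abs_of_pos hε)) _ (hmem (-ε) (by rw [abs_neg, abs_of_pos hε]))
      ⟨1 / 2, 1 / 2, by norm_num, by norm_num, by norm_num, by module⟩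
    have hz : z = 0 := by
      have : ε • z = 0 := by simpa using h
      exact (smul_eq_zero.1 this).resolve_left hε.ne'
    ext k
    rw [← hcol c k]
    have : ∀ q, (∑ v, c v • assignVec v : Fin m × κ → ℝ) q = 0 := fun q => congrFun hz q
    simp [this]
  obtain ⟨v₀, hv₀⟩ : ∃ v, w v ≠ 0 := by
    by_contra! h
    simp [h] at hw1
  let x : κ → ℝ := fun k => ∑ i, y (i, k)
  have hxdef : x = ∑ v, w v • useVec v := by
    ext k; simp only [x]; rw [hwy, hcol]
  have hx : x - useVec v₀ ∈ Sp := by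
    have : x - useVec v₀ = ∑ v, w v • (useVec v - useVec v₀) := by
      simp only [smul_sub, Finset.sum_sub_distrib, ← Finset.sum_smul, hw1, hxdef, one_smul]
    rw [this]
    refine Sp.sum_mem fun v _ => ?_
    by_cases hv : w v = 0
    · simp [hv]
    · exact Sp.smul_mem _ (hspan _ v₀ v hv₀ hv rfl)
  obtain ⟨μ, hμ⟩ := (Submodule.mem_span_image_finset_iff_exists_fun' ℝ).1 hx
  choose β hβ using hFb v₀ (hwF v₀ hv₀)
  have hDA : ∀ (θ : (κ → ℤ) → ℝ) t, ∑ c, (a c t : ℝ) * (∑ d ∈ D, θ d • cst d) c =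
      ∑ d ∈ D, θ d * ∑ c, (a c t : ℝ) * d c := by
    intro θ t
    simp only [Finset.sum_apply, Pi.smul_apply, smul_eq_mul, Finset.mul_sum, cst]
    rw [Finset.sum_comm]
    exact Finset.sum_congr rfl fun d _ => Finset.sum_congr rfl fun c _ => by ring
  have hAx : ∀ t, ∑ c, (a c t : ℝ) * (x - useVec v₀) c = K * β t := by
    intro t
    have h1 := congrArg (Int.cast : ℤ → ℝ) (hβ t)
    push_cast at h1
    rw [← h1, ← hyb t]
    simp only [Pi.sub_apply, mul_sub, Finset.sum_sub_distrib, x, useVec]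
  obtain ⟨ν, hν⟩ := hK D (fun d hd c => by
      simp only [D, Finset.mem_filter, Fintype.mem_piFinset, Finset.mem_Icc] at hd
      exact abs_le.2 (hd.1 c)) β ⟨fun d => μ d / K, fun t => by
      have := hAx t
      rw [← hμ, hDA] at this
      simp only [div_mul_eq_mul_div]
      rw [← Finset.sum_div, this]
      field_simp⟩
  have hu := hinj (∑ d ∈ D, (μ d - ν d) • cst d)
    (Sp.sum_mem fun d hd => Sp.smul_mem _ (Submodule.subset_span ⟨d, hd, rfl⟩)) (fun t => by
      have h1 := hAx t
      have h2 := congrArg (Int.cast : ℤ → ℝ) (hν t)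
      rw [← hμ, hDA] at h1
      push_cast at h2
      rw [hDA]
      simp only [sub_mul, Finset.sum_sub_distrib]
      rw [h1, h2, sub_self])
  refine ⟨fun c => useCount v₀ c + ∑ d ∈ D, ν d * d c, fun c => ?_⟩
  have h1 := congrFun hμ c
  have h2 := congrFun hu c
  simp only [sub_smul, Finset.sum_sub_distrib] at h2
  rw [hμ] at h2
  simp only [Pi.sub_apply, Finset.sum_apply, Pi.smul_apply, smul_eq_mul, Pi.zero_apply, useVec, x,
    cst] at h2
  push_cast
  linarith

end Extreme

section Residues

variable {T : ℕ} {κ : Type} [Fintype κ] [DecidableEq κ]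

/-- A modulus that clears the denominators of all systems appearing in
`colSum_integral_of_mem_extremePoints`. -/
lemma exists_modulus (a : κ → Fin T → ℤ) :
    ∃ K : ℕ, 0 < K ∧ ∀ D : Finset (κ → ℤ), (∀ d ∈ D, ∀ c, |d c| ≤ Fintype.card κ) →
      ∀ β : Fin T → ℤ,
      (∃ μ : (κ → ℤ) → ℝ, ∀ t, ∑ d ∈ D, μ d * ∑ c, (a c t : ℝ) * d c = β t) →
      ∃ ν : (κ → ℤ) → ℤ, ∀ t, ∑ d ∈ D, ν d * ∑ c, a c t * d c = K * β t := by
  let Bx : Finset (κ → ℤ) := Fintype.piFinset fun _ => Finset.Icc (-(Fintype.card κ : ℤ))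
    (Fintype.card κ)
  let G : ∀ D : Finset (κ → ℤ), Matrix (Fin T) D ℤ := fun D t d => ∑ c, a c t * d.1 c
  choose q hq0 hq using fun D => exists_uniform_denominator (G D)
  refine ⟨∏ D ∈ Bx.powerset, q D, Finset.prod_pos fun D _ => hq0 D, fun D hD β ⟨μ, hμ⟩ => ?_⟩
  have hDB : D ∈ Bx.powerset := by
    rw [Finset.mem_powerset]
    intro d hd
    simp only [Bx, Fintype.mem_piFinset, Finset.mem_Icc]
    exact fun c => abs_le.1 (hD d hd c)
  obtain ⟨k, hk⟩ := Finset.dvd_prod_of_mem q hDB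
  obtain ⟨ν, hν⟩ := hq D β ⟨fun d => μ d, fun t => by
    rw [← hμ t, ← Finset.sum_coe_sort D]
    refine Finset.sum_congr rfl fun d _ => ?_
    simp only [G]
    push_cast
    ring⟩
  refine ⟨fun d => if h : d ∈ D then k * ν ⟨d, h⟩ else 0, fun t => ?_⟩
  rw [hk, ← Finset.sum_coe_sort D]
  push_cast
  rw [mul_right_comm, ← hν t, Finset.sum_mul]
  refine Finset.sum_congr rfl fun d _ => ?_
  simp only [G, Finset.coe_mem, dif_pos]
  ring

lemma residueClass_section_subset {m : ℕ} (a : κ → Fin T → ℤ) (b : Fin T → ℤ) {K : ℕ}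
    (hK0 : 0 < K)
    (hK : ∀ D : Finset (κ → ℤ), (∀ d ∈ D, ∀ c, |d c| ≤ Fintype.card κ) → ∀ β : Fin T → ℤ,
      (∃ μ : (κ → ℤ) → ℝ, ∀ t, ∑ d ∈ D, μ d * ∑ c, (a c t : ℝ) * d c = β t) →
      ∃ ν : (κ → ℤ) → ℤ, ∀ t, ∑ d ∈ D, ν d * ∑ c, a c t * d c = K * β t)
    (F : Set (Fin m → κ))
    (hF : ∀ v ∈ F, ∀ v', v' ∈ F ↔ ∀ c, (K : ℤ) ∣ useCount v' c - useCount v c)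
    (hFb : ∀ v ∈ F, ∀ t, (K : ℤ) ∣ b t - ∑ c, a c t * useCount v c) :
    convexHull ℝ (assignVec '' F) ∩ {y | ∀ t, ∑ c, (a c t : ℝ) * ∑ i, y (i, c) = b t} ⊆
      convexHull ℝ (assignVec '' {v : Fin m → κ | ∀ t, ∑ c, a c t * useCount v c = b t}) := by
  have hcomp : IsCompact (convexHull ℝ (assignVec '' F)) :=
    (Set.Finite.image _ (Set.toFinite F)).isCompact_convexHull ℝ
  have hclosed : IsClosed {y : Fin m × κ → ℝ | ∀ t, ∑ c, (a c t : ℝ) * ∑ i, y (i, c) = b t} := by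
    simp only [Set.ofPred_forall]
    exact isClosed_iInter fun t => isClosed_eq (by fun_prop) continuous_const
  have hconv : Convex ℝ {y : Fin m × κ → ℝ | ∀ t, ∑ c, (a c t : ℝ) * ∑ i, y (i, c) = b t} := by
    intro y hy z hz s r _ _ hsr t
    have : ∑ c, (a c t : ℝ) * ∑ i, (s • y + r • z) (i, c) =
        s * ∑ c, (a c t : ℝ) * ∑ i, y (i, c) + r * ∑ c, (a c t : ℝ) * ∑ i, z (i, c) := by
      simp only [Pi.add_apply, Pi.smul_apply, smul_eq_mul, Finset.sum_add_distrib,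
        ← Finset.mul_sum, mul_add]
      rw [Finset.mul_sum, Finset.mul_sum]
      congr 1 <;> exact Finset.sum_congr rfl fun c _ => by ring
    rw [this, hy t, hz t, ← add_mul, hsr, one_mul]
  rw [← closure_convexHull_extremePoints (hcomp.inter_right hclosed)
    ((convex_convexHull ℝ _).inter hconv)]
  refine closure_minimal (convexHull_min ?_ (convex_convexHull ℝ _))
    ((Set.Finite.image _ (Set.toFinite _)).isCompact_convexHull ℝ).isClosed
  intro y hy
  obtain ⟨X, hX⟩ := colSum_integral_of_mem_extremePoints a b hK0 hK F hF hFb hy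
  obtain ⟨hyW, hyb⟩ := hy.1
  obtain ⟨w, hw0, -, hw1, rfl⟩ := (mem_convexHull_image_iff_exists_weights _ _ _).1 hyW
  have hnn : ∀ q, 0 ≤ (∑ v, w v • assignVec v : Fin m × κ → ℝ) q := by
    intro q
    simp only [Finset.sum_apply, Pi.smul_apply, smul_eq_mul]
    refine Finset.sum_nonneg fun v _ => mul_nonneg (hw0 v) ?_
    simp only [assignVec]; split_ifs <;> simp
  have hXnn : ∀ c, 0 ≤ X c := fun c => by
    have : (0 : ℝ) ≤ X c := by rw [← hX]; exact Finset.sum_nonneg fun i _ => hnn _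
    exact_mod_cast this
  lift X to κ → ℕ using hXnn
  have hrow : ∀ i, ∑ c, (∑ v, w v • assignVec v : Fin m × κ → ℝ) (i, c) = 1 := by
    intro i
    simp only [Finset.sum_apply, Pi.smul_apply, smul_eq_mul]
    rw [Finset.sum_comm]
    simp [assignVec, hw1]
  refine convexHull_mono (Set.image_mono ?_)
    (mem_convexHull_of_integral_colSum _ hnn hrow X (by simpa using hX))
  intro v hv t
  have h1 := hyb t
  simp only [hX] at h1
  have h2 : ∀ c, useCount v c = X c := fun c => by
    have := hv c
    rw [sum_assignVec, useVec] at this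
    exact_mod_cast this
  simp only [h2]
  exact_mod_cast h1

/-- The layered-network extended formulation: it combines, over the admissible final states, the
flow formulations of the assignments reaching that state, together with the demand equations. -/
lemma isEF_of_states {m : ℕ} (a : κ → Fin T → ℤ) (b : Fin T → ℤ) {S R : Type} [Fintype S]
    [DecidableEq S] [AddCommGroup S] [Fintype R] [DecidableEq R] (g : κ → S) (fin : R → S)
    (hfin : ∀ v : Fin m → κ, (∀ t, ∑ c, a c t * useCount v c = b t) →
      ∃ r, ∑ i, g (v i) = fin r)
    (hsub : ∀ r, convexHull ℝ (assignVec '' {v : Fin m → κ | ∑ i, g (v i) = fin r}) ∩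
      {y | ∀ t, ∑ c, (a c t : ℝ) * ∑ i, y (i, c) = b t} ⊆
      convexHull ℝ (assignVec '' {v : Fin m → κ | ∀ t, ∑ c, a c t * useCount v c = b t})) :
    IsEF (convexHull ℝ
        (assignVec '' {v : Fin m → κ | ∀ t, ∑ c, a c t * useCount v c = b t}))
      (Fintype.card (R × Fin (m + 1) × S ⊕ R × Fin m × S × κ)) := by
  let E := R × Fin (m + 1) × S ⊕ R × Fin m × S × κ
  let H : R → Fin (m + 1) → S → (E → ℝ) →ₗ[ℝ] ℝ := fun r i s =>
    LinearMap.proj (Sum.inl (r, i, s))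
  let N : R → Fin m → S → κ → (E → ℝ) →ₗ[ℝ] ℝ := fun r i s c =>
    LinearMap.proj (Sum.inr (r, i, s, c))
  let L₁ : (E → ℝ) →ₗ[ℝ] (R × Fin m × S → ℝ) := LinearMap.pi fun p =>
    ∑ c, N p.1 p.2.1 p.2.2 c - H p.1 p.2.1.castSucc p.2.2
  let L₂ : (E → ℝ) →ₗ[ℝ] (R × Fin m × S → ℝ) := LinearMap.pi fun p =>
    ∑ c, N p.1 p.2.1 (p.2.2 - g c) c - H p.1 p.2.1.succ p.2.2
  let L₃ : (E → ℝ) →ₗ[ℝ] (R × S → ℝ) := LinearMap.pi fun p =>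
    if p.2 = 0 then 0 else H p.1 0 p.2
  let L₄ : (E → ℝ) →ₗ[ℝ] (R × S → ℝ) := LinearMap.pi fun p =>
    if p.2 = fin p.1 then 0 else H p.1 (Fin.last m) p.2
  let L₅ : (E → ℝ) →ₗ[ℝ] (R × Fin T → ℝ) := LinearMap.pi fun p =>
    ∑ c, (a c p.2 : ℝ) • ∑ i, ∑ s, N p.1 i s c - (b p.2 : ℝ) • H p.1 0 0
  let L₆ : (E → ℝ) →ₗ[ℝ] ℝ := ∑ r, H r 0 0
  let π : (E → ℝ) →ₗ[ℝ] (Fin m × κ → ℝ) := LinearMap.pi fun q => ∑ r, ∑ s, N r q.1 s q.2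
  refine isEF_of_nonneg_image (L₁.prod (L₂.prod (L₃.prod (L₄.prod (L₅.prod L₆)))))
    (0, 0, 0, 0, 0, 1) π ?_
  have hL : ∀ f : E → ℝ, L₁.prod (L₂.prod (L₃.prod (L₄.prod (L₅.prod L₆)))) f =
      (0, 0, 0, 0, 0, 1) ↔
      (∀ r i s, ∑ c, f (.inr (r, i, s, c)) = f (.inl (r, i.castSucc, s))) ∧
      (∀ r i s, ∑ c, f (.inr (r, i, s - g c, c)) = f (.inl (r, i.succ, s))) ∧
      (∀ r s, s ≠ 0 → f (.inl (r, 0, s)) = 0) ∧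
      (∀ r s, s ≠ fin r → f (.inl (r, Fin.last m, s)) = 0) ∧
      (∀ r t, ∑ c, (a c t : ℝ) * ∑ i, ∑ s, f (.inr (r, i, s, c)) = b t * f (.inl (r, 0, 0))) ∧
      ∑ r, f (.inl (r, 0, 0)) = 1 := by
    intro f
    have h3 : ∀ (p : Prop) [Decidable p] (G : (E → ℝ) →ₗ[ℝ] ℝ),
        (if p then (0 : (E → ℝ) →ₗ[ℝ] ℝ) else G) f = 0 ↔ (¬ p → G f = 0) := by
      intro p _ G
      by_cases hp : p <;> simp [hp]
    have e : L₁.prod (L₂.prod (L₃.prod (L₄.prod (L₅.prod L₆)))) f =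
        (L₁ f, L₂ f, L₃ f, L₄ f, L₅ f, L₆ f) := rfl
    rw [e]
    simp only [Prod.mk.injEq, funext_iff, Prod.forall,
      L₁, L₂, L₃, L₄, L₅, L₆, LinearMap.pi_apply, Pi.zero_apply, h3, LinearMap.sub_apply,
      LinearMap.sum_apply, LinearMap.smul_apply, smul_eq_mul, sub_eq_zero, H, N,
      LinearMap.proj_apply, ne_eq]
  have hπ : ∀ (f : E → ℝ) q, π f q = ∑ r, ∑ s, f (.inr (r, q.1, s, q.2)) := by
    intro f q
    simp only [π, N, LinearMap.pi_apply, LinearMap.sum_apply, LinearMap.proj_apply]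
  simp only [hL]
  apply subset_antisymm
  · rintro _ ⟨f, ⟨hf0, h1, h2, h3, h4, h5, h6⟩, rfl⟩
    choose w hw0 hwr hwh hwf using fun r => exists_path_decomposition g (fin r) m
      (fun i s c => f (.inr (r, i, s, c))) (fun i s => f (.inl (r, i, s)))
      (fun i s c => hf0 _) (fun i s => hf0 _) (h1 r) (h2 r) (h4 r)
    have hwz : ∀ r s v, s ≠ 0 → w r s v = 0 := by
      intro r s v hs
      have : w r s v ≤ ∑ v, w r s v :=
        Finset.single_le_sum (f := fun v => w r s v) (fun v _ => hw0 r s v) (mem_univ v)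
      rw [hwh, h3 r s hs] at this
      exact le_antisymm this (hw0 r s v)
    let y : R → Fin m × κ → ℝ := fun r => ∑ v, w r 0 v • assignVec v
    have hy : ∀ r i c, ∑ s, f (.inr (r, i, s, c)) = y r (i, c) := by
      intro r i c
      rw [← hwf r i c, Finset.sum_eq_single 0]
      · simp [y]
      · intro s _ hs
        simp [hwz r s _ hs]
      · simp
    let μ : R → ℝ := fun r => f (.inl (r, 0, 0))
    have hμy : ∀ r, μ r = 0 → y r = 0 := by
      intro r hr
      refine Finset.sum_eq_zero fun v _ => ?_
      have : w r 0 v ≤ ∑ v, w r 0 v :=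
        Finset.single_le_sum (f := fun v => w r 0 v) (fun v _ => hw0 r 0 v) (mem_univ v)
      rw [hwh] at this
      rw [le_antisymm (this.trans_eq hr) (hw0 r 0 v), zero_smul]
    have hsum : π f = ∑ r ∈ univ.filter (fun r => μ r ≠ 0), μ r • ((μ r)⁻¹ • y r) := by
      have e1 : π f = ∑ r, y r := by
        ext q
        rw [hπ, Finset.sum_apply]
        exact Finset.sum_congr rfl fun r _ => hy r q.1 q.2
      rw [e1, ← Finset.sum_subset (Finset.subset_univ (univ.filter fun r => μ r ≠ 0))]
      · refine Finset.sum_congr rfl fun r hr => ?_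
        rw [smul_smul, mul_inv_cancel₀ (by simpa using hr), one_smul]
      · intro r _ hr
        exact hμy r (by simpa using hr)
    rw [hsum]
    refine (convex_convexHull ℝ _).sum_mem (fun r _ => hf0 _) ?_ fun r hr => ?_
    · rw [← h6]
      exact Finset.sum_subset (Finset.subset_univ _) fun r _ hr => by simpa using hr
    · have hr : μ r ≠ 0 := by simpa using hr
      refine hsub r ⟨(mem_convexHull_image_iff_exists_weights _ _ _).2
        ⟨fun v => (μ r)⁻¹ * w r 0 v, fun v => mul_nonneg (inv_nonneg.2 (hf0 _)) (hw0 _ _ _),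
          fun v hv => ?_, ?_, ?_⟩, fun t => ?_⟩
      · have := hwr r 0 v (right_ne_zero_of_mul hv)
        simpa using this
      · rw [← Finset.mul_sum, hwh]
        exact inv_mul_cancel₀ hr
      · simp only [y, Finset.smul_sum, smul_smul]
      · have h := h5 r t
        simp only [hy] at h
        have e : ∑ c, (a c t : ℝ) * ∑ i, ((μ r)⁻¹ • y r) (i, c) =
            (μ r)⁻¹ * ∑ c, (a c t : ℝ) * ∑ i, y r (i, c) := by
          simp only [Pi.smul_apply, smul_eq_mul, ← Finset.mul_sum]
          rw [Finset.mul_sum]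
          exact Finset.sum_congr rfl fun c _ => by ring
        rw [e, h]
        change (μ r)⁻¹ * (b t * μ r) = b t
        field_simp
  · refine convexHull_min ?_ (Convex.linear_image ?_ π)
    · rintro _ ⟨v, hv, rfl⟩
      obtain ⟨r, hr⟩ := hfin v hv
      let p : Fin (m + 1) → S := Fin.partialSum fun i => g (v i)
      have hp0 : p 0 = 0 := Fin.partialSum_zero _
      have hpl : p (Fin.last m) = fin r := by
        rw [← hr]
        simp only [p, Fin.partialSum, Fin.val_last]
        rw [List.take_of_length_le (by simp), List.sum_ofFn]
      have hps : ∀ i, p i.succ = p i.castSucc + g (v i) := fun i => Fin.partialSum_succ _ _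
      let f : E → ℝ := Sum.elim (fun q => if q.1 = r ∧ q.2.2 = p q.2.1 then 1 else 0)
        (fun q => if q.1 = r ∧ q.2.2.1 = p q.2.1.castSucc ∧ v q.2.1 = q.2.2.2 then 1 else 0)
      have hfs : ∀ r' i c, ∑ s, f (.inr (r', i, s, c)) =
          if r' = r then assignVec v (i, c) else 0 := by
        intro r' i c
        by_cases h : r' = r <;> by_cases hc : v i = c <;> simp [f, h, hc, assignVec]
      refine ⟨f, ⟨fun e => ?_, fun r' i s => ?_, fun r' i s => ?_, fun r' s hs => ?_,
        fun r' s hs => ?_, fun r' t => ?_, ?_⟩, ?_⟩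
      · rcases e with e | e <;> simp only [f, Sum.elim_inl, Sum.elim_inr] <;> split_ifs <;> simp
      · by_cases h : r' = r <;> by_cases hc : s = p i.castSucc <;> simp [f, h, hc]
      · rw [Finset.sum_eq_single (v i)]
        · simp [f, hps, sub_eq_iff_eq_add]
        · intro c _ hc
          simp [f, hc.symm]
        · simp
      · simp [f, hp0, hs]
      · simp only [f, Sum.elim_inl, hpl, ite_eq_right_iff, one_ne_zero, imp_false]
        rintro ⟨rfl, h⟩
        exact hs h
      · simp only [hfs]
        by_cases h : r' = r
        · subst h
          simp only [if_true, sum_assignVec, f, Sum.elim_inl, hp0, and_self, mul_one, useVec]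
          exact_mod_cast hv t
        · simp [f, h]
      · simp [f, hp0]
      · ext q
        rw [hπ]
        simp [hfs]
    · rintro f ⟨hf, h⟩ f' ⟨hf', h'⟩ s u hs hu hsu
      refine ⟨fun e => ?_, (hL _).1 ?_⟩
      · have := hf e; have := hf' e
        simp only [Pi.add_apply, Pi.smul_apply, smul_eq_mul]
        positivity
      · rw [map_add, map_smul, map_smul, (hL f).2 h, (hL f').2 h', ← add_smul, hsu, one_smul]

/-- The integer hull of the assignments with prescribed demand has an extended formulation whose
size is linear in the number of machines. -/
lemma exists_linear_isEF (a : κ → Fin T → ℤ) :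
    ∃ B : ℕ, ∀ (m : ℕ) (b : Fin T → ℤ), ∃ k ≤ B * (m + 1), IsEF (convexHull ℝ
      (assignVec '' {v : Fin m → κ | ∀ t, ∑ c, a c t * useCount v c = b t})) k := by
  classical
  obtain ⟨K, hK0, hK⟩ := exists_modulus a
  have : NeZero K := ⟨hK0.ne'⟩
  let n := Fintype.card (κ → ZMod K)
  refine ⟨n * n * (1 + Fintype.card κ), fun m b => ?_⟩
  let R := {r : κ → ZMod K // ∀ t, ∑ c, (a c t : ZMod K) * r c = b t}
  let g : κ → κ → ZMod K := fun c => Pi.single c 1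
  have hg : ∀ (v : Fin m → κ) c, (∑ i, g (v i)) c = (useCount v c : ZMod K) := by
    intro v c
    simp [g, useCount, Finset.sum_apply, Pi.single_apply, eq_comm]
  have hEF := isEF_of_states (m := m) a b g (fun r : R => r.1) (fun v hv => by
      refine ⟨⟨∑ i, g (v i), fun t => ?_⟩, rfl⟩
      simp only [hg]
      exact_mod_cast congrArg (Int.cast : ℤ → ZMod K) (hv t)) (fun r => by
      refine residueClass_section_subset a b hK0 hK _ (fun v hv v' => ?_) (fun v hv t => ?_)
      · rw [Set.mem_ofPred_eq] at hv
        rw [Set.mem_ofPred_eq, ← hv, funext_iff]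
        simp only [hg]
        refine forall_congr' fun c => ?_
        rw [← ZMod.intCast_zmod_eq_zero_iff_dvd]
        push_cast
        rw [sub_eq_zero]
      · rw [Set.mem_ofPred_eq] at hv
        rw [← ZMod.intCast_zmod_eq_zero_iff_dvd]
        push_cast
        rw [← r.2 t, ← hv]
        simp only [hg, sub_self])
  refine ⟨_, ?_, hEF⟩
  have hR : Fintype.card R ≤ n := Fintype.card_subtype_le _
  simp only [Fintype.card_sum, Fintype.card_prod, Fintype.card_fin]
  change Fintype.card R * ((m + 1) * n) + Fintype.card R * (m * (n * Fintype.card κ)) ≤ _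
  calc _ ≤ n * ((m + 1) * n) + n * ((m + 1) * (n * Fintype.card κ)) := by gcongr; omega
    _ = _ := by ring

end Residues

/-- The integer hull of the pattern-configuration program has extension complexity
`O(f(T)·poly(n,m))`. -/
theorem Ppat_small_xc :
    ∃ (f : ℕ → ℕ) (c : ℕ), ∀ (T n m : ℕ) (p : Fin n → ℕ),
      (∀ j, 1 ≤ p j ∧ p j ≤ T) →
      xc (Ppat m T (fun q =>
          (Finset.univ.filter (fun j : Fin n => p j = (q : ℕ) + 1)).card)) ≤
        f T * (n + m + 2) ^ c := by
  choose B hB using fun T => exists_linear_isEF (T := T) (κ := Pattern T)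
    (fun C q => ((C.1 q : ℕ) : ℤ))
  refine ⟨B, 1, fun T n m p _ => ?_⟩
  generalize (fun q : Fin T => (Finset.univ.filter (fun j : Fin n => p j = (q : ℕ) + 1)).card) = np
  obtain ⟨k, hk, hEF⟩ := hB T m (fun q => np q)
  have hset : Ppat m T np = convexHull ℝ (assignVec '' {v : Fin m → Pattern T |
      ∀ t, ∑ C, ((C.1 t : ℕ) : ℤ) * useCount v C = np t}) := by
    have hsum : ∀ (v : Fin m → Pattern T) (q : Fin T), ∑ i, ∑ C : Pattern T,
        ((C.1 q : ℕ) : ℝ) * assignVec v (i, C) = ((∑ C : Pattern T, ((C.1 q : ℕ) : ℤ) *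
          useCount v C : ℤ) : ℝ) := by
      intro v q
      rw [Finset.sum_comm]
      push_cast
      simp only [← Finset.mul_sum, sum_assignVec, useVec]
    rw [Ppat]
    congr 1
    ext y
    constructor
    · rintro ⟨h01, hrow, hdem⟩
      have hex : ∀ i, ∃ C, y (i, C) = 1 := by
        intro i
        by_contra! h
        have : ∑ C, y (i, C) = 0 :=
          Finset.sum_eq_zero fun C _ => (h01 (i, C)).resolve_right (h C)
        rw [hrow] at this
        exact one_ne_zero this
      choose v hv using hex
      have hy : assignVec v = y := by
        ext ⟨i, C⟩
        simp only [assignVec]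
        split_ifs with h
        · rw [← h, hv]
        · have h1 : ∑ D ∈ {v i, C}, y (i, D) ≤ ∑ D, y (i, D) :=
            Finset.sum_le_sum_of_subset_of_nonneg (Finset.subset_univ _) fun D _ _ => by
              rcases h01 (i, D) with h | h <;> simp [h]
          rw [Finset.sum_pair h, hv, hrow] at h1
          rcases h01 (i, C) with h2 | h2
          · exact h2.symm
          · linarith
      refine ⟨v, fun t => ?_, hy⟩
      have := hdem t
      rw [← hy, hsum] at this
      exact_mod_cast this
    · rintro ⟨v, hv, rfl⟩
      refine ⟨fun q => ?_, fun i => by simp [assignVec], fun q => ?_⟩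
      · simp only [assignVec]; split_ifs <;> simp
      · rw [hsum, hv q]; simp
  rw [hset]
  calc xc _ ≤ k := Nat.sInf_le hEF
    _ ≤ B T * (m + 1) := hk
    _ ≤ B T * (n + m + 2) ^ 1 := by rw [pow_one]; gcongr <;> omega
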